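/- arXiv:2509.00556 — 3 statements merged into one kernel-verified Lean document; each statement's English description precedes it below -/
import Mathlib

section
/- Two subsets S, T ⊆ 𝔽₂ⁿ are affinely equivalent if and only if there is a bijection g : S → T such that for every subset X ⊆ S, X is an even zero-sum set of S if and only if the image g(X) is an even zero-sum set of T (i.e., the image map g_* restricts to a bijection from E(S) onto E(T)). -/
/-!
An affine automorphism `x ↦ L x + c` sends a sum over a set `X` of even size to
`L (∑ X) + |X| • c = L (∑ X)`, so it preserves and reflects even zero-sum sets.

Conversely, let `g : S → T` be a bijection respecting even zero-sum sets. Let `W` be the space of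
coefficient functions `f : S → 𝔽₂` with `∑ f = 0`, that is, of indicators of even subsets of `S`.
The linear maps `A f = ∑ f s • s` and `B f = ∑ f s • g s` on `W` have as kernels exactly the
indicators of the even zero-sum sets of `S`, respectively of the `g`-preimages of those of `T`; so
`ker A = ker B`. Hence some linear automorphism `L` of `𝔽₂ⁿ` satisfies `L ∘ A = B`
(`exists_linearEquiv_of_ker_eq`). Fixing `s₀ ∈ S` and evaluating at the indicator of `{s, s₀}`
gives `L (s - s₀) = g s - g s₀`, so `g` is the restriction to `S` of an affine automorphism.
-/

/-- A subset `X` of `S ⊆ 𝔽₂ⁿ` is an even zero-sum set of `S` if it has even cardinality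
and its elements sum to the zero vector. -/
def IsEvenZeroSum {n : ℕ} (S X : Finset (Fin n → ZMod 2)) : Prop :=
  X ⊆ S ∧ Even X.card ∧ (∑ x ∈ X, x) = 0

/-- Two linear maps into the same finite-dimensional space with equal kernels differ by an
automorphism of the target: the isomorphism of their ranges extends to the whole space. -/
lemma exists_linearEquiv_of_ker_eq {K W V : Type*} [Field K] [AddCommGroup W] [Module K W]
    [AddCommGroup V] [Module K V] [FiniteDimensional K V] (A B : W →ₗ[K] V)
    (h : LinearMap.ker A = LinearMap.ker B) : ∃ L : V ≃ₗ[K] V, ∀ w, L (A w) = B w := by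
  obtain ⟨L, hL⟩ := Submodule.exists_linearEquiv_restrict_eq
    (A.quotKerEquivRange.symm ≪≫ₗ Submodule.quotEquivOfEq _ _ h ≪≫ₗ B.quotKerEquivRange)
  refine ⟨L, fun w => ?_⟩
  have h1 := hL ⟨A w, LinearMap.mem_range_self A w⟩
  rw [← h1]
  simp [LinearMap.quotKerEquivRange_symm_apply_image]

/-- The subset of `S` whose indicator is `f`. -/
def supportFinset {V : Type*} {S : Finset V} (f : S → ZMod 2) : Finset V :=
  (Finset.univ.filter (fun s => f s = 1)).map (Function.Embedding.subtype _)

lemma supportFinset_subset {V : Type*} {S : Finset V} (f : S → ZMod 2) :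
    supportFinset f ⊆ S := by
  intro x hx
  simp only [supportFinset, Finset.mem_map] at hx
  obtain ⟨a, -, rfl⟩ := hx
  exact a.2

lemma linearCombination_eq_sum_supportFinset {V M : Type*} [AddCommGroup M] [Module (ZMod 2) M]
    {S : Finset V} (f : S → ZMod 2) (h : V → M) :
    Fintype.linearCombination (ZMod 2) (fun s : S => h s) f = ∑ x ∈ supportFinset f, h x := by
  rw [Fintype.linearCombination_apply, supportFinset, Finset.sum_map, Finset.sum_filter]
  refine Finset.sum_congr rfl fun s _ => ?_
  have : f s = 0 ∨ f s = 1 := by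
    generalize f s = a
    revert a
    decide
  rcases this with h0 | h0 <;> simp [h0]

lemma isEvenZeroSum_image_affine {n : ℕ} {S X : Finset (Fin n → ZMod 2)} (hX : X ⊆ S)
    (L : (Fin n → ZMod 2) ≃ₗ[ZMod 2] (Fin n → ZMod 2)) (c : Fin n → ZMod 2) :
    IsEvenZeroSum S X ↔
      IsEvenZeroSum (S.image fun x => L x + c) (X.image fun x => L x + c) := by
  have hinj : Function.Injective fun x => L x + c :=
    fun x y hxy => L.injective (add_right_cancel hxy)
  unfold IsEvenZeroSum
  rw [Finset.card_image_of_injective _ hinj, Finset.sum_image hinj.injOn]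
  simp only [hX, Finset.image_subset_image hX, true_and]
  refine and_congr_right fun he => ?_
  have hc : X.card • c = 0 := by
    rw [← Nat.cast_smul_eq_nsmul (ZMod 2), ZMod.natCast_eq_zero_iff_even.2 he, zero_smul]
  rw [Finset.sum_add_distrib, Finset.sum_const, hc, add_zero, ← map_sum, L.map_eq_zero_iff]

/-- A bijection respecting even zero-sum sets respects differences up to a linear automorphism. -/
lemma exists_linearEquiv_sub {n : ℕ} {S T : Finset (Fin n → ZMod 2)}
    {g : (Fin n → ZMod 2) → (Fin n → ZMod 2)} (hg : Set.BijOn g ↑S ↑T)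
    (h : ∀ X ⊆ S, (IsEvenZeroSum S X ↔ IsEvenZeroSum T (X.image g))) :
    ∃ L : (Fin n → ZMod 2) ≃ₗ[ZMod 2] (Fin n → ZMod 2),
      ∀ s ∈ S, ∀ t ∈ S, L (s - t) = g s - g t := by
  let ε := Fintype.linearCombination (ZMod 2) (fun _ : S => (1 : ZMod 2))
  let A := Fintype.linearCombination (ZMod 2) (fun s : S => (s : Fin n → ZMod 2))
  let B := Fintype.linearCombination (ZMod 2) (fun s : S => g s)
  have hker : LinearMap.ker (A.domRestrict (LinearMap.ker ε)) =
      LinearMap.ker (B.domRestrict (LinearMap.ker ε)) := by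
    ext ⟨f, hf⟩
    have hsub := supportFinset_subset f
    have hinj : Set.InjOn g (supportFinset f) := hg.injOn.mono (by exact_mod_cast hsub)
    have himg : (supportFinset f).image g ⊆ T :=
      Finset.image_subset_iff.2 fun x hx => hg.mapsTo (hsub hx)
    have heven : Even (supportFinset f).card := by
      rw [LinearMap.mem_ker] at hf
      have h1 := linearCombination_eq_sum_supportFinset f (fun _ => (1 : ZMod 2))
      rw [← ZMod.natCast_eq_zero_iff_even]
      simpa [hf, ε] using (h1.symm.trans hf)
    have hX := h _ hsub
    unfold IsEvenZeroSum at hX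
    rw [Finset.card_image_of_injOn hinj, Finset.sum_image hinj] at hX
    simp only [hsub, himg, heven, true_and] at hX
    rw [LinearMap.mem_ker, LinearMap.mem_ker, LinearMap.domRestrict_apply,
      LinearMap.domRestrict_apply]
    have hA : A f = _ := linearCombination_eq_sum_supportFinset f (fun x => x)
    have hB : B f = _ := linearCombination_eq_sum_supportFinset f g
    rw [hA, hB]
    exact hX
  obtain ⟨L, hL⟩ := exists_linearEquiv_of_ker_eq _ _ hker
  refine ⟨L, fun s hs t ht => ?_⟩
  -- In characteristic two, `single s - single t` is the indicator of `{s, t}`.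
  have h1 := hL ⟨Pi.single ⟨s, hs⟩ 1 - Pi.single ⟨t, ht⟩ 1, by
    simp [ε, Fintype.linearCombination_apply_single]⟩
  simpa [A, B, LinearMap.domRestrict_apply, Fintype.linearCombination_apply_single] using h1

/-- Two subsets `S, T ⊆ 𝔽₂ⁿ` are affinely equivalent if and only if there is a bijection
`g : S → T` such that for every `X ⊆ S`, `X` is an even zero-sum set of `S` iff `g(X)` is
an even zero-sum set of `T`. -/
theorem stmt_1 (n : ℕ) (S T : Finset (Fin n → ZMod 2)) :
    (∃ (L : (Fin n → ZMod 2) ≃ₗ[ZMod 2] (Fin n → ZMod 2)) (c : Fin n → ZMod 2),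
        S.image (fun x => L x + c) = T) ↔
      ∃ g : (Fin n → ZMod 2) → (Fin n → ZMod 2),
        Set.BijOn g ↑S ↑T ∧
        ∀ X ⊆ S, (IsEvenZeroSum S X ↔ IsEvenZeroSum T (X.image g)) := by
  constructor
  · rintro ⟨L, c, rfl⟩
    refine ⟨fun x => L x + c, ?_, fun X hX => isEvenZeroSum_image_affine hX L c⟩
    rw [Finset.coe_image]
    exact Set.InjOn.bijOn_image fun x _ y _ hxy => L.injective (add_right_cancel hxy)
  · rintro ⟨g, hg, h⟩
    obtain ⟨L, hL⟩ := exists_linearEquiv_sub hg h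
    have himg : S.image g = T := by
      rw [← Finset.coe_inj, Finset.coe_image, hg.image_eq]
    rcases S.eq_empty_or_nonempty with rfl | ⟨s₀, hs₀⟩
    · exact ⟨L, 0, by simpa using himg⟩
    · refine ⟨L, g s₀ - L s₀, ?_⟩
      rw [← himg]
      refine Finset.image_congr fun s hs => ?_
      have h1 := hL s hs s₀ hs₀
      rw [map_sub] at h1
      change L s + (g s₀ - L s₀) = g s
      rw [← sub_add_cancel (g s) (g s₀), ← h1]
      abel
end

section
/- Let S be a finite set, let 𝒱 be a linear subspace of 𝒫(S) under symmetric difference over 𝔽₂ with dim(𝒱) = r, let X₁, …, X_r and Y₁, …, Y_r be bases of 𝒱, and let M be an invertible r × r matrix over 𝔽₂ such that z_X(b) = z_Y(M b) for all b ∈ 𝔽₂^r (M is the change-of-basis matrix). Then v_X(a) = v_Y((Mᵀ)^{-1} a) for all a ∈ 𝔽₂^r. -/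
/-!
A point `x` has a membership vector `χ_X(x) ∈ 𝔽₂^r` recording which `X i` contain it, and `v_X(a)`
is the set of `x ∈ S` with `χ_X(x) = a`. Membership of `x` in `z_X(b)` is the pairing
`χ_X(x) ⬝ b` (`indicator_zSet`), so `z_X(b) = z_Y(M b)` for all `b` gives
`χ_X(x) ⬝ b = χ_Y(x) ⬝ M b = Mᵀ χ_Y(x) ⬝ b` for all `b`, that is, `χ_X(x) = Mᵀ χ_Y(x)`.
As `Mᵀ` is invertible, `χ_X(x) = a` if and only if `χ_Y(x) = (Mᵀ)⁻¹ a`.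
-/

open scoped symmDiff
open Matrix

/-- `zSet X a` is the symmetric difference of the sets `X i` over the indices `i` with
`a i = 1` (with `zSet X 0 = ∅`). -/
def zSet {α : Type*} [DecidableEq α] {r : ℕ} (X : Fin r → Finset α)
    (a : Fin r → ZMod 2) : Finset α :=
  (Finset.univ.filter (fun i => a i = 1)).fold (· ∆ ·) ∅ X

/-- The Venn region of `S` with respect to `X₁, …, X_r` determined by `a ∈ 𝔽₂^r`. -/
def vennRegion {α : Type*} [DecidableEq α] {r : ℕ} (S : Finset α)
    (X : Fin r → Finset α) (a : Fin r → ZMod 2) : Finset α :=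
  S.filter (fun x => ∀ i, x ∈ X i ↔ a i = 1)

/-- The vector in `𝔽₂^r` whose `i`-th coordinate is `1` exactly when `x ∈ X i`. -/
def memVec {α : Type*} [DecidableEq α] {r : ℕ} (X : Fin r → Finset α) (x : α) :
    Fin r → ZMod 2 :=
  fun i => if x ∈ X i then 1 else 0

lemma indicator_symmDiff {α : Type*} [DecidableEq α] (A B : Finset α) (x : α) :
    (if x ∈ A ∆ B then 1 else 0 : ZMod 2) =
      (if x ∈ A then 1 else 0) + (if x ∈ B then 1 else 0) := by
  have h2 : (1 + 1 : ZMod 2) = 0 := by decide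
  by_cases hA : x ∈ A <;> by_cases hB : x ∈ B <;> simp [Finset.mem_symmDiff, hA, hB, h2]

lemma indicator_fold {α ι : Type*} [DecidableEq α] [DecidableEq ι] (s : Finset ι)
    (X : ι → Finset α) (x : α) :
    (if x ∈ (s.fold (· ∆ ·) ∅ X : Finset α) then 1 else 0 : ZMod 2) = ∑ i ∈ s, if x ∈ X i then 1 else 0 := by
  induction s using Finset.induction_on with
  | empty => simp
  | insert i s hi ih => rw [Finset.fold_insert hi, indicator_symmDiff, ih, Finset.sum_insert hi]

lemma zmod_two_eq_ite (c : ZMod 2) : c = if c = 1 then 1 else 0 := by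
  revert c; decide

/-- Membership in `z_X(b)` is the linear functional `b ↦ χ_X(x) ⬝ b`. -/
lemma indicator_zSet {α : Type*} [DecidableEq α] {r : ℕ} (X : Fin r → Finset α)
    (b : Fin r → ZMod 2) (x : α) :
    (if x ∈ zSet X b then 1 else 0 : ZMod 2) = memVec X x ⬝ᵥ b := by
  rw [zSet, indicator_fold, Finset.sum_filter]
  refine Finset.sum_congr rfl fun i _ => ?_
  rw [zmod_two_eq_ite (b i)]
  by_cases h : b i = 1 <;> simp [h, memVec]

lemma mem_vennRegion_iff {α : Type*} [DecidableEq α] {r : ℕ} (S : Finset α)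
    (X : Fin r → Finset α) (a : Fin r → ZMod 2) (x : α) :
    x ∈ vennRegion S X a ↔ x ∈ S ∧ memVec X x = a := by
  rw [vennRegion, Finset.mem_filter, funext_iff]
  refine and_congr_right fun _ => forall_congr' fun i => ?_
  rw [zmod_two_eq_ite (a i)]
  by_cases h : a i = 1 <;> by_cases hx : x ∈ X i <;> simp [h, hx, memVec]

/-- Let `S` be a finite set, `𝒱` a linear subspace of `𝒫(S)` under symmetric difference
over `𝔽₂` with bases `X₁, …, X_r` and `Y₁, …, Y_r`, and `M` an invertible `r × r` matrix
over `𝔽₂` with `z_X(b) = z_Y(M b)` for all `b` (the change-of-basis matrix).  Then the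
Venn coordinates transform by `(Mᵀ)⁻¹`: `v_X(a) = v_Y((Mᵀ)⁻¹ a)` for all `a ∈ 𝔽₂^r`. -/
theorem stmt_8 {α : Type*} [DecidableEq α] (S : Finset α)
    (V : Finset (Finset α)) (r : ℕ) (X Y : Fin r → Finset α)
    (hVS : ∀ A ∈ V, A ⊆ S) (hV0 : (∅ : Finset α) ∈ V)
    (hVcl : ∀ A ∈ V, ∀ B ∈ V, A ∆ B ∈ V)
    (hXbasis : Set.range (zSet X) = ↑V ∧ Function.Injective (zSet X))
    (hYbasis : Set.range (zSet Y) = ↑V ∧ Function.Injective (zSet Y))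
    (M : Matrix (Fin r) (Fin r) (ZMod 2)) (hM : IsUnit M)
    (hchange : ∀ b : Fin r → ZMod 2, zSet X b = zSet Y (M.mulVec b)) :
    ∀ a : Fin r → ZMod 2, vennRegion S X a = vennRegion S Y ((Mᵀ)⁻¹.mulVec a) := by
  intro a
  have hdet : IsUnit (Mᵀ).det := by
    rw [Matrix.det_transpose]
    exact (Matrix.isUnit_iff_isUnit_det M).mp hM
  ext x
  have hvec : memVec X x = Mᵀ *ᵥ memVec Y x := by
    rw [Matrix.mulVec_transpose]
    refine dotProduct_eq _ _ fun b => ?_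
    rw [← indicator_zSet, hchange b, indicator_zSet, Matrix.dotProduct_mulVec]
  rw [mem_vennRegion_iff, mem_vennRegion_iff, hvec]
  refine and_congr_right fun _ => ⟨fun h => ?_, fun h => ?_⟩
  · rw [← h, Matrix.mulVec_mulVec, Matrix.nonsing_inv_mul _ hdet, Matrix.one_mulVec]
  · rw [h, Matrix.mulVec_mulVec, Matrix.mul_nonsing_inv _ hdet, Matrix.one_mulVec]
end

section
/- Let S = B ⊔ D ⊆ 𝔽₂ⁿ be finite, where B is an affine basis for S and D = S \ B, and let φ : 𝒫(D) → E(S) be the sumset map induced by B. Then φ is a bijection from 𝒫(D) onto E(S), and φ is linear: φ(D₁ △ D₂) = φ(D₁) △ φ(D₂) for all D₁, D₂ ⊆ D. -/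
/-!
Summation over finsets in characteristic two turns symmetric difference into addition, so the even
zero-sum sets of `S` are closed under `∆`, and the sumset map `φ` is additive for `∆`
(`sumsetMap_symmDiff`). Each generator `X_w` is an even zero-sum set, hence so is every value of `φ`.

Since `X_w ∩ D = {w}`, one has `φ(D') ∩ D = D'` for `D' ⊆ D` (`sumsetMap_inter`), which gives
injectivity. For surjectivity, given an even zero-sum set `Z`, the set `Z ∆ φ(Z ∩ D)` is an even
zero-sum set that misses `D`, so it lies in `B`; affine independence of `B` forces it to be empty
(`eq_empty_of_affineIndependent`), so `Z = φ(Z ∩ D)`.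
-/

open scoped symmDiff

/-- Given, for each dependent point `w`, the even zero-sum set `X_w = {w} ∪ B_w`
(encoded by the function `ξ`), the sumset map sends a set `D'` of dependent points to the
symmetric difference `△_{w ∈ D'} X_w` (with `∅ ↦ ∅`). -/
def sumsetMap {n : ℕ} (ξ : (Fin n → ZMod 2) → Finset (Fin n → ZMod 2))
    (D' : Finset (Fin n → ZMod 2)) : Finset (Fin n → ZMod 2) :=
  D'.fold (· ∆ ·) ∅ ξ

/-- In characteristic two, summation over a finset is additive for symmetric difference. -/
theorem sum_symmDiff_of_add_self {α M : Type*} [DecidableEq α] [AddCommMonoid M]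
    (hM : ∀ m : M, m + m = 0) (g : α → M) (X Y : Finset α) :
    ∑ x ∈ X ∆ Y, g x = ∑ x ∈ X, g x + ∑ x ∈ Y, g x := by
  have h : X ∆ Y = (X \ Y) ∪ (Y \ X) := rfl
  rw [h, Finset.sum_union disjoint_sdiff_sdiff,
    ← Finset.sum_inter_add_sum_sdiff X Y, ← Finset.sum_inter_add_sum_sdiff Y X,
    Finset.inter_comm Y X, add_add_add_comm, hM, zero_add]

theorem even_card_iff_sum_one {α : Type*} (X : Finset α) :
    Even X.card ↔ ∑ _x ∈ X, (1 : ZMod 2) = 0 := by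
  simp [ZMod.natCast_eq_zero_iff_even]

theorem vec_add_self {n : ℕ} (v : Fin n → ZMod 2) : v + v = 0 := by
  ext i
  exact CharTwo.add_self_eq_zero (v i)

theorem IsEvenZeroSum.symmDiff {n : ℕ} {S X Y : Finset (Fin n → ZMod 2)}
    (hX : IsEvenZeroSum S X) (hY : IsEvenZeroSum S Y) : IsEvenZeroSum S (X ∆ Y) := by
  obtain ⟨hXS, hXe, hX0⟩ := hX
  obtain ⟨hYS, hYe, hY0⟩ := hY
  refine ⟨symmDiff_le_sup.trans (sup_le hXS hYS), ?_, ?_⟩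
  · rw [even_card_iff_sum_one] at *
    rw [sum_symmDiff_of_add_self CharTwo.add_self_eq_zero, hXe, hYe, add_zero]
  · rw [sum_symmDiff_of_add_self vec_add_self, hX0, hY0, add_zero]

theorem sumsetMap_insert {n : ℕ} (ξ : (Fin n → ZMod 2) → Finset (Fin n → ZMod 2))
    {a : Fin n → ZMod 2} {T : Finset (Fin n → ZMod 2)} (ha : a ∉ T) :
    sumsetMap ξ (insert a T) = ξ a ∆ sumsetMap ξ T :=
  Finset.fold_insert ha

theorem sumsetMap_singleton_symmDiff {n : ℕ}
    (ξ : (Fin n → ZMod 2) → Finset (Fin n → ZMod 2))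
    (a : Fin n → ZMod 2) (T : Finset (Fin n → ZMod 2)) :
    sumsetMap ξ ({a} ∆ T) = ξ a ∆ sumsetMap ξ T := by
  by_cases ha : a ∈ T
  · have h1 : ({a} : Finset (Fin n → ZMod 2)) ∆ T = T.erase a := by
      ext x
      simp only [Finset.mem_symmDiff, Finset.mem_singleton, Finset.mem_erase]
      grind
    have h2 := sumsetMap_insert ξ (Finset.notMem_erase a T)
    rw [Finset.insert_erase ha] at h2
    rw [h1, h2, symmDiff_symmDiff_cancel_left]
  · have h1 : ({a} : Finset (Fin n → ZMod 2)) ∆ T = insert a T := by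
      ext x
      simp only [Finset.mem_symmDiff, Finset.mem_singleton, Finset.mem_insert]
      grind
    rw [h1, sumsetMap_insert ξ ha]

theorem sumsetMap_symmDiff {n : ℕ} (ξ : (Fin n → ZMod 2) → Finset (Fin n → ZMod 2))
    (D₁ D₂ : Finset (Fin n → ZMod 2)) :
    sumsetMap ξ (D₁ ∆ D₂) = sumsetMap ξ D₁ ∆ sumsetMap ξ D₂ := by
  induction D₁ using Finset.induction_on with
  | empty =>
    have h : sumsetMap ξ ∅ = ⊥ := rfl
    rw [h, bot_symmDiff, ← Finset.bot_eq_empty, bot_symmDiff]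
  | insert a s ha ih =>
    have h : insert a s = ({a} : Finset (Fin n → ZMod 2)) ∆ s := by
      ext x
      simp only [Finset.mem_symmDiff, Finset.mem_singleton, Finset.mem_insert]
      grind
    rw [h, symmDiff_assoc, sumsetMap_singleton_symmDiff, ih, sumsetMap_singleton_symmDiff,
      symmDiff_assoc]

/-- If every `ξ w` meets `D` exactly in `w`, then `D'` is recovered from its image under the
sumset map by intersecting with `D`. -/
theorem sumsetMap_inter {n : ℕ} {ξ : (Fin n → ZMod 2) → Finset (Fin n → ZMod 2)}
    {D : Finset (Fin n → ZMod 2)} (hξ : ∀ w ∈ D, ξ w ∩ D = {w})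
    {D' : Finset (Fin n → ZMod 2)} (hD' : D' ⊆ D) : sumsetMap ξ D' ∩ D = D' := by
  induction D' using Finset.induction_on with
  | empty => exact Finset.empty_inter D
  | insert a s ha ih =>
    rw [Finset.insert_subset_iff] at hD'
    have h1 := hξ a hD'.1
    have h2 := ih hD'.2
    rw [sumsetMap_insert ξ ha]
    simp only [Finset.ext_iff, Finset.mem_inter, Finset.mem_symmDiff, Finset.mem_singleton,
      Finset.mem_insert] at *
    grind

/-- The only even zero-sum set inside an affinely independent set is empty: its indicator
function is an affine dependence with weights in `ZMod 2`. -/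
theorem eq_empty_of_affineIndependent {n : ℕ} {B Y : Finset (Fin n → ZMod 2)}
    (hind : AffineIndependent (ZMod 2)
      (fun x : (B : Set (Fin n → ZMod 2)) => (x : Fin n → ZMod 2)))
    (hY : IsEvenZeroSum B Y) : Y = ∅ := by
  obtain ⟨hYB, hYe, hY0⟩ := hY
  rw [even_card_iff_sum_one] at hYe
  rw [affineIndependent_iff] at hind
  let Y' : Finset (B : Set (Fin n → ZMod 2)) := Y.subtype (· ∈ (B : Set (Fin n → ZMod 2)))
  have hsum : ∀ {M : Type} [AddCommMonoid M] (g : (Fin n → ZMod 2) → M),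
      ∑ x ∈ Y', g x = ∑ x ∈ Y, g x := fun g =>
    Finset.sum_subtype_of_mem g (fun x hx => Finset.mem_coe.2 (hYB hx))
  have key := hind Y' (fun _ => 1) ((hsum (fun _ => (1 : ZMod 2))).trans hYe)
    (by simpa using (hsum (fun x => x)).trans hY0)
  rw [Finset.eq_empty_iff_forall_notMem]
  intro y hy
  exact one_ne_zero (key ⟨y, hYB hy⟩ (Finset.mem_subtype.2 hy))

/-- Let `S = B ⊔ D ⊆ 𝔽₂ⁿ` be finite, where `B` is an affine basis for `S` and
`D = S \ B`, and let `φ = sumsetMap ξ` be the sumset map induced by `B`, where for each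
`w ∈ D` the set `ξ w = X_w` consists of `w` together with the unique odd-cardinality
subset of `B` summing to `w`.  Then `φ` is a bijection from `𝒫(D)` onto `E(S)`, and `φ`
is linear: `φ(D₁ ∆ D₂) = φ(D₁) ∆ φ(D₂)` for all `D₁, D₂ ⊆ D`. -/
theorem stmt_14 (n : ℕ) (S B D : Finset (Fin n → ZMod 2))
    (hSBD : S = B ∪ D) (hdisj : Disjoint B D)
    (hind : AffineIndependent (ZMod 2)
      (fun x : (B : Set (Fin n → ZMod 2)) => (x : Fin n → ZMod 2)))
    (hspan : ∀ x ∈ S, x ∈ affineSpan (ZMod 2) (B : Set (Fin n → ZMod 2)))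
    (ξ : (Fin n → ZMod 2) → Finset (Fin n → ZMod 2))
    (hξ : ∀ w ∈ D, w ∈ ξ w ∧ ξ w ⊆ insert w B ∧
      Odd ((ξ w).erase w).card ∧ (∑ x ∈ (ξ w).erase w, x) = w) :
    (∀ D' ⊆ D, IsEvenZeroSum S (sumsetMap ξ D')) ∧
    (∀ D₁ ⊆ D, ∀ D₂ ⊆ D, sumsetMap ξ D₁ = sumsetMap ξ D₂ → D₁ = D₂) ∧
    (∀ Z : Finset (Fin n → ZMod 2), IsEvenZeroSum S Z →
      ∃ D' ⊆ D, sumsetMap ξ D' = Z) ∧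
    (∀ D₁ ⊆ D, ∀ D₂ ⊆ D,
      sumsetMap ξ (D₁ ∆ D₂) = sumsetMap ξ D₁ ∆ sumsetMap ξ D₂) := by
  have hinter : ∀ w ∈ D, ξ w ∩ D = {w} := by
    intro w hw
    obtain ⟨hmem, hsub, -, -⟩ := hξ w hw
    ext x
    simp only [Finset.mem_inter, Finset.mem_singleton]
    constructor
    · rintro ⟨hx, hxD⟩
      exact (Finset.mem_insert.1 (hsub hx)).resolve_right
        (fun hxB => Finset.disjoint_left.1 hdisj hxB hxD)
    · rintro rfl
      exact ⟨hmem, hw⟩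
  have hgen : ∀ w ∈ D, IsEvenZeroSum S (ξ w) := by
    intro w hw
    obtain ⟨hmem, hsub, hodd, hsum⟩ := hξ w hw
    refine ⟨?_, ?_, ?_⟩
    · rw [hSBD]
      exact hsub.trans (Finset.insert_subset (Finset.mem_union_right _ hw)
        Finset.subset_union_left)
    · rw [← Finset.card_erase_add_one hmem]
      exact hodd.add_one
    · rw [← Finset.add_sum_erase _ _ hmem, hsum, vec_add_self]
  have hEven : ∀ D' ⊆ D, IsEvenZeroSum S (sumsetMap ξ D') := by
    intro D' hD'
    induction D' using Finset.induction_on with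
    | empty => exact ⟨Finset.empty_subset _, Even.zero, Finset.sum_empty⟩
    | insert a s ha ih =>
      rw [Finset.insert_subset_iff] at hD'
      rw [sumsetMap_insert ξ ha]
      exact (hgen a hD'.1).symmDiff (ih hD'.2)
  refine ⟨hEven, ?_, ?_, fun D₁ _ D₂ _ => sumsetMap_symmDiff ξ D₁ D₂⟩
  · intro D₁ h₁ D₂ h₂ h
    rw [← sumsetMap_inter hinter h₁, h, sumsetMap_inter hinter h₂]
  · intro Z hZ
    have hsub : Z ∩ D ⊆ D := Finset.inter_subset_right
    refine ⟨Z ∩ D, hsub, ?_⟩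
    obtain ⟨hS, hcard, hzero⟩ := hZ.symmDiff (hEven _ hsub)
    have hB : Z ∆ sumsetMap ξ (Z ∩ D) ⊆ B := by
      intro x hx
      have hxS := hS hx
      have hD := sumsetMap_inter hinter hsub
      rw [hSBD, Finset.mem_union] at hxS
      simp only [Finset.ext_iff, Finset.mem_inter] at hD
      rw [Finset.mem_symmDiff] at hx
      have := hD x
      tauto
    have h0 := eq_empty_of_affineIndependent hind ⟨hB, hcard, hzero⟩
    exact (symmDiff_eq_bot.1 h0).symm
end
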